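/- arXiv:2104.01216 — 8 statements merged into one kernel-verified Lean document; each statement's English description precedes it below -/
import Mathlib

section
/- Let N ≥ 1 and let α, β, γ, δ ∈ ℂ satisfy α ≠ 0, β ≠ 0, γ ≠ 0, δ ≠ 0 and α·δ ≠ β·γ. For each j ∈ {0, …, N}, the vector v_j ∈ ℂ^{N+1} with entries v_j[k] = Σ_{i=0}^{min(k,j)} C(j,i)·C(N−j, k−i)·(δ/γ)^{k−i}·(β/α)^{i} for k = 0, …, N is nonzero (indeed v_j[0] = 1) and satisfies J_N · v_j = (α·δ·(N−j) + β·γ·j) · v_j. In particular the N+1 numbers α·δ·(N−j) + β·γ·j, j = 0, …, N, are pairwise distinct eigenvalues of J_N. -/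
open Matrix

/-- The generalised Sylvester-Kac matrix `J_N` depending on parameters `α β γ δ`. -/
noncomputable def Jmat (N : ℕ) (α β γ δ : ℂ) : Matrix (Fin (N+1)) (Fin (N+1)) ℂ :=
  Matrix.of fun k l =>
    if (l : ℕ) = (k : ℕ) + 1 then ((k : ℕ) + 1 : ℂ) * α * γ
    else if (l : ℕ) = (k : ℕ) then ((k : ℕ) : ℂ) * (α * δ + β * γ)
    else if (l : ℕ) + 1 = (k : ℕ) then -((N - (k : ℕ) + 1 : ℕ) : ℂ) * β * δ
    else 0

open Polynomial in
/-- The generating polynomial `(1 + s X)^a (1 + t X)^b` of the eigenvectors. -/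
noncomputable def genPoly (s t : ℂ) (a b : ℕ) : ℂ[X] :=
  (1 + C s * X) ^ a * (1 + C t * X) ^ b

open Polynomial in
lemma coeff_one_add_C_mul_X_pow (s : ℂ) (n k : ℕ) :
    ((1 + C s * X : ℂ[X]) ^ n).coeff k = (n.choose k : ℂ) * s ^ k := by
  have h : (1 + C s * X : ℂ[X]) ^ n = ((1 + X) ^ n).comp (C s * X) := by simp
  rw [h, comp_C_mul_X_coeff, coeff_one_add_X_pow]

lemma coeff_genPoly (s t : ℂ) (a b k : ℕ) :
    (genPoly s t a b).coeff k = ∑ i ∈ Finset.range (min k b + 1),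
      (b.choose i : ℂ) * (a.choose (k - i) : ℂ) * s ^ (k - i) * t ^ i := by
  rw [genPoly, mul_comm, Polynomial.coeff_mul, Finset.Nat.sum_antidiagonal_eq_sum_range_succ_mk]
  symm
  refine Finset.sum_subset_zero_on_sdiff (fun i hi => ?_) (fun i hi => ?_) (fun i _ => ?_)
  · simp only [Finset.mem_range] at hi ⊢
    omega
  · have hb : b < i := by
      simp only [Finset.mem_sdiff, Finset.mem_range] at hi
      omega
    simp [coeff_one_add_C_mul_X_pow, Nat.choose_eq_zero_of_lt hb]
  · simp only [coeff_one_add_C_mul_X_pow]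
    ring

lemma coeff_genPoly_eq_zero (s t : ℂ) {a b k : ℕ} (h : a + b < k) :
    (genPoly s t a b).coeff k = 0 := by
  rw [coeff_genPoly]
  refine Finset.sum_eq_zero fun i hi => ?_
  have ha : a < k - i := by
    simp only [Finset.mem_range] at hi
    omega
  simp [Nat.choose_eq_zero_of_lt ha]

open Polynomial in
lemma mul_derivative_pow (A : ℂ[X]) (n : ℕ) :
    A * derivative (A ^ n) = C (n : ℂ) * A ^ n * derivative A := by
  cases n with
  | zero => simp
  | succ n =>
    rw [derivative_pow, Nat.add_sub_cancel]
    ring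

open Polynomial in
lemma genPoly_ode (s t : ℂ) (a b : ℕ) :
    (1 + C s * X) * (1 + C t * X) * derivative (genPoly s t a b) =
      (C (a * s) * (1 + C t * X) + C (b * t) * (1 + C s * X)) * genPoly s t a b := by
  have hd (r : ℂ) : derivative (1 + C r * X : ℂ[X]) = C r := by simp
  have hs := mul_derivative_pow (1 + C s * X) a
  have ht := mul_derivative_pow (1 + C t * X) b
  rw [hd] at hs ht
  rw [genPoly, derivative_mul, C_mul, C_mul]
  linear_combination (1 + C t * X) ^ b * (1 + C t * X) * hs +
    (1 + C s * X) ^ a * (1 + C s * X) * ht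

open Polynomial in
lemma coeff_X_mul_derivative (p : ℂ[X]) (k : ℕ) :
    (X * derivative p).coeff k = k * p.coeff k := by
  cases k with
  | zero => simp
  | succ k =>
    rw [coeff_X_mul, coeff_derivative]
    push_cast
    ring

open Polynomial in
lemma genPoly_ode_expanded (s t : ℂ) (a b : ℕ) :
    derivative (genPoly s t a b) + C (s + t) * (X * derivative (genPoly s t a b)) +
        C (s * t) * (X * (X * derivative (genPoly s t a b))) =
      C (a * s + b * t) * genPoly s t a b + C (s * t * (a + b)) * (X * genPoly s t a b) := by
  have h := genPoly_ode s t a b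
  simp only [C_mul, C_add] at h ⊢
  linear_combination h

lemma coeff_one_genPoly (s t : ℂ) (a b : ℕ) :
    (genPoly s t a b).coeff 1 = (a * s + b * t) * (genPoly s t a b).coeff 0 := by
  have h := congrArg (fun p => Polynomial.coeff p 0) (genPoly_ode_expanded s t a b)
  simpa only [Polynomial.coeff_add, Polynomial.coeff_C_mul, Polynomial.coeff_derivative,
    Polynomial.coeff_X_mul_zero, Nat.cast_zero, zero_add, mul_zero, add_zero, mul_one] using h

lemma coeff_genPoly_recurrence (s t : ℂ) (a b m : ℕ) :
    (m + 2) * (genPoly s t a b).coeff (m + 2) + (s + t) * ((m + 1) * (genPoly s t a b).coeff (m + 1))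
        + s * t * (m * (genPoly s t a b).coeff m) =
      (a * s + b * t) * (genPoly s t a b).coeff (m + 1)
        + s * t * (a + b) * (genPoly s t a b).coeff m := by
  have h := congrArg (fun p => Polynomial.coeff p (m + 1)) (genPoly_ode_expanded s t a b)
  simp only [Polynomial.coeff_add, Polynomial.coeff_C_mul, Polynomial.coeff_X_mul (n := m),
    coeff_X_mul_derivative, Polynomial.coeff_derivative] at h
  push_cast at h
  linear_combination h

/-- The action of `Jmat` on a sequence that vanishes just past the last index. -/
lemma Jmat_mulVec_apply (N : ℕ) (α β γ δ : ℂ) (w : ℕ → ℂ) (hw : w (N + 1) = 0)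
    (k : Fin (N + 1)) :
    (Jmat N α β γ δ).mulVec (fun l => w l) k =
      ((k : ℕ) + 1) * α * γ * w (k + 1) + (k : ℕ) * (α * δ + β * γ) * w k
        - if (k : ℕ) = 0 then 0 else (N - (k : ℕ) + 1) * β * δ * w (k - 1) := by
  obtain ⟨k, hk⟩ := k
  have hsplit (l : ℕ) :
      (if l = k + 1 then ((k : ℂ) + 1) * α * γ
        else if l = k then (k : ℂ) * (α * δ + β * γ)
        else if l + 1 = k then -((N - k + 1 : ℕ) : ℂ) * β * δ else 0) * w l =
      (if l = k + 1 then ((k : ℂ) + 1) * α * γ * w (k + 1) else 0)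
        + (if l = k then (k : ℂ) * (α * δ + β * γ) * w k else 0)
        + (if l = k - 1 then
            if k = 0 then 0 else -(((N : ℂ) - k + 1) * β * δ * w (k - 1)) else 0) := by
    have hc : ((N - k + 1 : ℕ) : ℂ) = (N : ℂ) - k + 1 := by
      rw [Nat.cast_add, Nat.cast_sub (by omega), Nat.cast_one]
    rw [hc]
    rcases k with _ | k
    · simp only [Nat.add_eq_zero_iff, one_ne_zero, and_false, if_true, if_false, ite_self, add_zero]
      split_ifs <;> first | omega | (subst_vars; simp)
    · simp only [Nat.add_eq_zero_iff, one_ne_zero, and_false, if_false, Nat.add_sub_cancel,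
        Nat.add_right_cancel_iff]
      split_ifs <;> first | omega | (subst_vars; ring)
  simp only [Matrix.mulVec, dotProduct, Jmat, Matrix.of_apply]
  rw [Fin.sum_univ_eq_sum_range (fun l => (if l = k + 1 then ((k : ℂ) + 1) * α * γ
        else if l = k then (k : ℂ) * (α * δ + β * γ)
        else if l + 1 = k then -((N - k + 1 : ℕ) : ℂ) * β * δ else 0) * w l) (N + 1)]
  simp only [hsplit, Finset.sum_add_distrib, Finset.sum_ite_eq', Finset.mem_range, hk,
    show k - 1 < N + 1 by omega, if_true]
  have htop : (if k + 1 < N + 1 then ((k : ℂ) + 1) * α * γ * w (k + 1) else 0) =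
      ((k : ℂ) + 1) * α * γ * w (k + 1) := by
    split_ifs with h
    · rfl
    · rw [show k + 1 = N + 1 by omega, hw, mul_zero]
  rw [htop]
  split_ifs <;> ring

lemma Jmat_mulVec_genPoly (α β γ δ : ℂ) (hα : α ≠ 0) (hγ : γ ≠ 0) {N a b : ℕ} (hab : a + b = N) :
    (Jmat N α β γ δ).mulVec (fun l => (genPoly (δ / γ) (β / α) a b).coeff l) =
      (α * δ * a + β * γ * b) • fun l : Fin (N + 1) => (genPoly (δ / γ) (β / α) a b).coeff l := by
  obtain ⟨s, rfl⟩ : ∃ s, δ = s * γ := ⟨δ / γ, by field_simp⟩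
  obtain ⟨t, rfl⟩ : ∃ t, β = t * α := ⟨β / α, by field_simp⟩
  rw [mul_div_cancel_right₀ _ hγ, mul_div_cancel_right₀ _ hα]
  have hN : (N : ℂ) = a + b := by rw [← hab, Nat.cast_add]
  ext ⟨k, hk⟩
  rw [Jmat_mulVec_apply N _ _ _ _ (fun l => (genPoly s t a b).coeff l)
    (coeff_genPoly_eq_zero s t (by omega)), Pi.smul_apply, smul_eq_mul, hN]
  rcases k with _ | m
  · have h := coeff_one_genPoly s t a b
    simp only [Nat.cast_zero, if_true, zero_add]
    linear_combination α * γ * h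
  · have h := coeff_genPoly_recurrence s t a b m
    simp only [Nat.add_eq_zero_iff, one_ne_zero, and_false, if_false, Nat.add_sub_cancel]
    push_cast
    linear_combination α * γ * h

theorem stmt_0 (N : ℕ) (hN : 1 ≤ N) (α β γ δ : ℂ)
    (hα : α ≠ 0) (hβ : β ≠ 0) (hγ : γ ≠ 0) (hδ : δ ≠ 0)
    (hD : α * δ ≠ β * γ)
    (v : Fin (N+1) → Fin (N+1) → ℂ)
    (hv : ∀ j k, v j k = ∑ i ∈ Finset.range (min (k : ℕ) (j : ℕ) + 1),
        ((j : ℕ).choose i : ℂ) * ((N - (j : ℕ)).choose ((k : ℕ) - i) : ℂ) *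
          (δ / γ) ^ ((k : ℕ) - i) * (β / α) ^ i)
    (μ : Fin (N+1) → ℂ)
    (hμ : ∀ j, μ j = α * δ * ((N : ℂ) - (j : ℕ)) + β * γ * (j : ℕ)) :
    (∀ j, v j 0 = 1) ∧ (∀ j, v j ≠ 0) ∧
      (∀ j, (Jmat N α β γ δ).mulVec (v j) = μ j • v j) ∧
      (∀ j j' : Fin (N+1), j ≠ j' → μ j ≠ μ j') := by
  have hvP (j : Fin (N + 1)) :
      v j = fun l : Fin (N + 1) => (genPoly (δ / γ) (β / α) (N - j) j).coeff l := by
    ext k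
    rw [hv, coeff_genPoly]
  have hone (j : Fin (N + 1)) : v j 0 = 1 := by simp [hv]
  refine ⟨hone, fun j hj => ?_, fun j => ?_, fun j j' hjj' h => hjj' ?_⟩
  · simpa [hj] using hone j
  · have hj : (j : ℕ) ≤ N := Nat.le_of_lt_succ j.isLt
    rw [hvP, hμ, Jmat_mulVec_genPoly α β γ δ hα hγ (Nat.sub_add_cancel hj), Nat.cast_sub hj]
  · rw [hμ, hμ] at h
    have hz : (α * δ - β * γ) * (((j : ℕ) : ℂ) - (j' : ℕ)) = 0 := by linear_combination -h
    have hcast := (mul_eq_zero.mp hz).resolve_left (sub_ne_zero.mpr hD)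
    exact Fin.ext (Nat.cast_injective (sub_eq_zero.mp hcast))
end

section
/- For every N ≥ 1 and all α, β, γ, δ ∈ ℂ, the characteristic polynomial of the matrix J_N factors completely with integer-combination roots: det(x·I_{N+1} − J_N) = Π_{j=0}^{N} (x − α·δ·(N−j) − β·γ·j) as polynomials in x over ℂ. -/
open Matrix Polynomial

/-- Column `j` holds the coefficients of `(β t + α) ^ j`. -/
noncomputable def linearPowMatrix (N : ℕ) (α β : ℂ) : Matrix (Fin (N+1)) (Fin (N+1)) ℂ :=
  Matrix.of fun k j => ((C β * X + C α) ^ (j : ℕ) : ℂ[X]).coeff k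

/-- The lower bidiagonal matrix to which `Jmat N α β γ δ` is similar when `β ≠ 0`. -/
noncomputable def bidiagMatrix (N : ℕ) (α β γ δ : ℂ) : Matrix (Fin (N+1)) (Fin (N+1)) ℂ :=
  Matrix.of fun i j =>
    (if (i : ℕ) = j then α * δ * ((N : ℂ) - (j : ℕ)) + β * γ * (j : ℕ) else 0) +
    (if (i : ℕ) = j + 1 then -(((N : ℂ) - (j : ℕ)) * δ) else 0)

lemma sum_fin_mul_ite_eq (n a : ℕ) (f : ℕ → ℂ) (c : ℂ) (h : n ≤ a → c = 0 ∨ f a = 0) :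
    ∑ l : Fin n, (if (l : ℕ) = a then c else 0) * f l = c * f a := by
  rw [Fin.sum_univ_eq_sum_range (fun l => (if l = a then c else 0) * f l) n]
  simp only [ite_mul, zero_mul, Finset.sum_ite_eq', Finset.mem_range]
  split_ifs with ha
  · rfl
  · rcases h (not_lt.mp ha) with h | h <;> simp [h]

lemma linear_pow_coeff_eq_zero (α β : ℂ) {j k : ℕ} (h : j < k) :
    ((C β * X + C α) ^ j : ℂ[X]).coeff k = 0 := by
  apply coeff_eq_zero_of_natDegree_lt
  have := natDegree_pow_le_of_le j (natDegree_linear_le (a := β) (b := α))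
  omega

/-- The first-order differential operator represented by `Jmat` acts on the powers of
`β t + α` in a bidiagonal way. -/
lemma diffOp_linear_pow (N j : ℕ) (α β γ δ : ℂ) :
    (C (α * γ) + C (α * δ + β * γ) * X + C (β * δ) * X ^ 2) *
        derivative ((C β * X + C α) ^ j : ℂ[X]) - C ((N : ℂ) * β * δ) * X * (C β * X + C α) ^ j =
      C (α * δ * ((N : ℂ) - j) + β * γ * j) * (C β * X + C α) ^ j
        + C (-(((N : ℂ) - j) * δ)) * (C β * X + C α) ^ (j + 1) := by
  cases j with
  | zero => simp; ring
  | succ j =>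
    rw [derivative_pow_succ]
    simp only [derivative_C_mul, derivative_X, derivative_C, map_mul, map_add,
      map_sub, map_neg, Nat.cast_add, Nat.cast_one, map_natCast, map_one]
    ring

lemma coeff_diffOp (a b c d : ℂ) (p : ℂ[X]) (k : ℕ) :
    ((C a + C b * X + C c * X ^ 2) * derivative p - C d * X * p).coeff k =
      (k + 1) * a * p.coeff (k + 1) + k * b * p.coeff k +
        (if k = 0 then 0 else ((k - 1) * c - d) * p.coeff (k - 1)) := by
  simp only [add_mul, mul_assoc, coeff_sub, coeff_add, coeff_C_mul]
  rcases k with _ | _ | k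
  · simp [coeff_derivative]
  · simp [coeff_derivative, coeff_X_pow_mul']
    ring
  · simp [coeff_derivative, coeff_X_pow_mul']
    ring

lemma Jmat_apply (N : ℕ) (α β γ δ : ℂ) (k l : Fin (N+1)) :
    Jmat N α β γ δ k l =
      (if (l : ℕ) = k + 1 then ((k : ℕ) + 1 : ℂ) * α * γ else 0) +
      (if (l : ℕ) = k then ((k : ℕ) : ℂ) * (α * δ + β * γ) else 0) +
      (if (l : ℕ) + 1 = k then -((N : ℂ) - (k : ℕ) + 1) * β * δ else 0) := by
  have hk : (k : ℕ) ≤ N := by omega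
  simp only [Jmat, Matrix.of_apply, Nat.cast_add, Nat.cast_sub hk, Nat.cast_one]
  split_ifs <;> first | omega | simp

lemma Jmat_mul_linearPowMatrix (N : ℕ) (α β γ δ : ℂ) :
    Jmat N α β γ δ * linearPowMatrix N α β = linearPowMatrix N α β * bidiagMatrix N α β γ δ := by
  ext k j
  have hk := k.isLt
  have hj := j.isLt
  have key := congrArg (fun p => coeff p (k : ℕ)) (diffOp_linear_pow N j α β γ δ)
  set f : ℕ → ℕ → ℂ := fun i m => ((C β * X + C α) ^ i : ℂ[X]).coeff m with hf
  have hR : (linearPowMatrix N α β * bidiagMatrix N α β γ δ) k j =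
      (α * δ * ((N : ℂ) - (j : ℕ)) + β * γ * (j : ℕ)) * f j k
        + -(((N : ℂ) - (j : ℕ)) * δ) * f (j + 1) k := by
    rw [Matrix.mul_apply,
      ← sum_fin_mul_ite_eq (N + 1) j (fun i => f i k) _ (by omega),
      ← sum_fin_mul_ite_eq (N + 1) (j + 1) (fun i => f i k), ← Finset.sum_add_distrib]
    · refine Finset.sum_congr rfl fun i _ => ?_
      simp only [linearPowMatrix, bidiagMatrix, Matrix.of_apply, hf]
      ring
    · intro h
      left
      have : (j : ℕ) = N := by omega
      simp [this]
  have h1 := sum_fin_mul_ite_eq (N + 1) (k + 1) (f j) (((k : ℕ) + 1 : ℂ) * α * γ)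
    fun h => Or.inr (linear_pow_coeff_eq_zero α β (by omega))
  have h2 := sum_fin_mul_ite_eq (N + 1) k (f j) (((k : ℕ) : ℂ) * (α * δ + β * γ)) (by omega)
  have h3 : ∑ l : Fin (N + 1),
      (if (l : ℕ) + 1 = k then -((N : ℂ) - (k : ℕ) + 1) * β * δ else 0) * f j l =
      if (k : ℕ) = 0 then 0 else
        (((k : ℕ) - 1 : ℂ) * (β * δ) - (N : ℂ) * β * δ) * f j (k - 1) := by
    split_ifs with h0
    · simp [h0]
    · have he : ∀ l : ℕ, l + 1 = k ↔ l = k - 1 := by omega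
      simp only [he]
      rw [sum_fin_mul_ite_eq (N + 1) (k - 1) (f j) _ (by omega)]
      ring
  rw [coeff_diffOp, coeff_add, coeff_C_mul, coeff_C_mul] at key
  rw [hR, ← key, Matrix.mul_apply]
  simp only [Jmat_apply, add_mul _ _ (linearPowMatrix _ _ _ _ _), Finset.sum_add_distrib]
  rw [← mul_assoc, ← h1, ← h2, ← h3]
  rfl

lemma det_linearPowMatrix_ne_zero (N : ℕ) (α : ℂ) {β : ℂ} (hβ : β ≠ 0) :
    (linearPowMatrix N α β).det ≠ 0 := by
  rw [Matrix.det_of_isUpperTriangular]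
  · refine Finset.prod_ne_zero_iff.mpr fun j _ => ?_
    have := coeff_pow_of_natDegree_le (m := (j : ℕ)) (natDegree_linear_le (a := β) (b := α))
    simp only [mul_one] at this
    simp [linearPowMatrix, this, hβ]
  · intro k j h
    exact linear_pow_coeff_eq_zero α β h

lemma charpoly_bidiagMatrix (N : ℕ) (α β γ δ : ℂ) :
    (bidiagMatrix N α β γ δ).charpoly =
      ∏ j : Fin (N+1), (X - C (α * δ * ((N : ℂ) - (j : ℕ)) + β * γ * (j : ℕ))) := by
  rw [← Matrix.charpoly_transpose, Matrix.charpoly_of_isUpperTriangular]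
  · simp [bidiagMatrix]
  · intro i j h
    have h' : (j : ℕ) < i := h
    simp only [bidiagMatrix, Matrix.transpose_apply, Matrix.of_apply]
    rw [if_neg (by omega), if_neg (by omega), add_zero]

theorem stmt_1 (N : ℕ) (hN : 1 ≤ N) (α β γ δ : ℂ) :
    (Jmat N α β γ δ).charpoly =
      ∏ j : Fin (N+1),
        (X - C (α * δ * ((N : ℂ) - (j : ℕ)) + β * γ * (j : ℕ))) := by
  by_cases hβ : β = 0
  · subst hβ
    rw [Matrix.charpoly_of_isUpperTriangular]
    · rw [← Equiv.prod_comp Fin.revPerm]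
      refine Finset.prod_congr rfl fun j _ => ?_
      have hj : (j : ℕ) ≤ N := by omega
      simp [Jmat_apply, Fin.val_rev, Nat.cast_sub hj]
      ring
    · intro i j h
      have h' : (j : ℕ) < i := h
      rw [Jmat_apply, if_neg (by omega), if_neg (by omega)]
      simp
  · have hu : IsUnit (linearPowMatrix N α β) :=
      (Matrix.isUnit_iff_isUnit_det _).mpr (det_linearPowMatrix_ne_zero N α hβ).isUnit
    obtain ⟨U, hU⟩ := hu
    have h : Jmat N α β γ δ = U.val * bidiagMatrix N α β γ δ * U⁻¹.val := by
      rw [hU, ← Jmat_mul_linearPowMatrix, ← hU, mul_assoc, Units.mul_inv, mul_one]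
    rw [h, Matrix.coe_units_inv, Matrix.charpoly_units_conj, charpoly_bidiagMatrix]
end

section
/- Let N ≥ 1. For each j ∈ {0, …, N}, the vector v_j ∈ ℂ^{N+1} (or ℚ^{N+1}) with entries v_j[k] = Σ_{i=0}^{min(k,j)} (−1)^{k−i}·C(j,i)·C(N−j, k−i), k = 0, …, N, is nonzero (v_j[0] = 1) and satisfies K_N · v_j = (2j − N) · v_j. In particular, the eigenvalues of the Sylvester–Kac matrix K_N are exactly the N+1 integers −N, −N+2, …, N−2, N. -/
open Matrix

/-- The Sylvester–Kac matrix `K_N` over `ℚ`. -/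
def Kmat (N : ℕ) : Matrix (Fin (N+1)) (Fin (N+1)) ℚ :=
  Matrix.of fun k l =>
    if (l : ℕ) = (k : ℕ) + 1 then ((k : ℕ) + 1 : ℚ)
    else if (l : ℕ) + 1 = (k : ℕ) then ((N - (k : ℕ) + 1 : ℕ) : ℚ)
    else 0

open Polynomial in
/-- The generating polynomial of the eigenvector of `Kmat (a + b)` with eigenvalue `a - b`. -/
noncomputable def kacPoly (a b : ℕ) : ℚ[X] := (1 + X) ^ a * (1 - X) ^ b

open Polynomial in
lemma coeff_one_sub_X_pow_rat (n k : ℕ) :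
    ((1 - X : ℚ[X]) ^ n).coeff k = (-1) ^ k * (n.choose k : ℚ) := by
  have h : (1 - X : ℚ[X]) ^ n = ((1 + X) ^ n).comp (C (-1) * X) := by
    simp [sub_eq_add_neg]
  rw [h, comp_C_mul_X_coeff, coeff_one_add_X_pow, mul_comm]

open Polynomial in
lemma kacPoly_coeff (a b k : ℕ) :
    (kacPoly a b).coeff k = ∑ i ∈ Finset.range (min k a + 1),
      (-1 : ℚ) ^ (k - i) * (a.choose i : ℚ) * (b.choose (k - i) : ℚ) := by
  rw [kacPoly, coeff_mul, Finset.Nat.sum_antidiagonal_eq_sum_range_succ_mk]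
  simp only [coeff_one_add_X_pow, coeff_one_sub_X_pow_rat]
  symm
  have hsub : Finset.range (min k a + 1) ⊆ Finset.range k.succ := by
    intro i
    simp only [Finset.mem_range]
    omega
  rw [Finset.sum_congr rfl fun i _ => by rw [mul_comm ((-1 : ℚ) ^ (k - i)), mul_assoc]]
  refine Finset.sum_subset hsub fun i hi hi' => ?_
  simp only [Finset.mem_range] at hi hi'
  rw [Nat.choose_eq_zero_of_lt (by omega : a < i)]
  simp

open Polynomial in
lemma kacPoly_derivative (a b : ℕ) :
    derivative (kacPoly a b) * (1 - X ^ 2) =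
      (C ((a : ℚ) - b) - C ((a : ℚ) + b) * X) * kacPoly a b := by
  have hpow (p : ℚ[X]) (n : ℕ) : derivative (p ^ n) * p = C (n : ℚ) * p ^ n * derivative p := by
    cases n with
    | zero => simp
    | succ n => rw [derivative_pow]; simp; ring
  have ha := hpow (1 + X) a
  have hb := hpow (1 - X) b
  simp only [derivative_add, derivative_sub, derivative_one, derivative_X, zero_add, zero_sub,
    mul_one, mul_neg] at ha hb
  rw [kacPoly, derivative_mul, C_sub, C_add]
  linear_combination (1 - X) ^ b * (1 - X) * ha + (1 + X) ^ a * (1 + X) * hb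

open Polynomial in
lemma kacPoly_coeff_one (a b : ℕ) :
    (kacPoly a b).coeff 1 = ((a : ℚ) - b) * (kacPoly a b).coeff 0 := by
  simpa [mul_coeff_zero, coeff_derivative] using congrArg (coeff · 0) (kacPoly_derivative a b)

open Polynomial in
lemma kacPoly_coeff_add_two (a b m : ℕ) :
    ((m : ℚ) + 2) * (kacPoly a b).coeff (m + 2) + ((a : ℚ) + b - m) * (kacPoly a b).coeff m =
      ((a : ℚ) - b) * (kacPoly a b).coeff (m + 1) := by
  have h := congrArg (coeff · (m + 1)) (kacPoly_derivative a b)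
  have hX : (derivative (kacPoly a b) * X ^ 2).coeff (m + 1) = m * (kacPoly a b).coeff m := by
    rw [pow_two, ← mul_assoc, coeff_mul_X]
    cases m with
    | zero => simp
    | succ m => rw [coeff_mul_X, coeff_derivative]; push_cast; ring
  simp only [mul_sub, sub_mul, mul_one, coeff_sub, hX, mul_assoc, coeff_C_mul, coeff_X_mul,
    coeff_derivative] at h
  push_cast at h
  linear_combination h

open Polynomial in
lemma kacPoly_coeff_eq_zero {a b k : ℕ} (h : a + b < k) : (kacPoly a b).coeff k = 0 := by
  refine coeff_eq_zero_of_natDegree_lt (lt_of_le_of_lt ?_ h)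
  unfold kacPoly
  compute_degree

lemma Kmat_mulVec_apply {N : ℕ} (f : ℕ → ℚ) (hf : f (N + 1) = 0) (k : Fin (N + 1)) :
    (Kmat N).mulVec (fun l => f l) k = ((k : ℕ) + 1 : ℚ) * f (k + 1) +
      if (k : ℕ) = 0 then 0 else ((N : ℚ) - (k : ℕ) + 1) * f (k - 1) := by
  obtain ⟨k, hk⟩ := k
  have hterm (l : ℕ) :
      (if l = k + 1 then ((k : ℚ) + 1) else if l + 1 = k then ((N - k + 1 : ℕ) : ℚ) else 0) * f l =
      (if l = k + 1 then ((k : ℚ) + 1) * f (k + 1) else 0) +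
        if l = k - 1 then (if k = 0 then 0 else ((N : ℚ) - k + 1) * f (k - 1)) else 0 := by
    have hc : ((N - k + 1 : ℕ) : ℚ) = (N : ℚ) - k + 1 := by
      rw [Nat.cast_add, Nat.cast_sub (by omega), Nat.cast_one]
    rw [hc]
    split_ifs <;> first | omega | (subst_vars; simp)
  simp only [Matrix.mulVec, dotProduct, Kmat, Matrix.of_apply]
  rw [Fin.sum_univ_eq_sum_range (fun l => (if l = k + 1 then ((k : ℚ) + 1) else
    if l + 1 = k then ((N - k + 1 : ℕ) : ℚ) else 0) * f l) (N + 1)]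
  simp only [hterm, Finset.sum_add_distrib, Finset.sum_ite_eq', Finset.mem_range]
  rw [if_pos (by omega : k - 1 < N + 1)]
  congr 1
  split_ifs with h
  · rfl
  · rw [show k = N by omega, hf, mul_zero]

lemma Kmat_mulVec_kacPoly_coeff (a b : ℕ) :
    (Kmat (a + b)).mulVec (fun l => (kacPoly a b).coeff l) =
      ((a : ℚ) - b) • fun l : Fin (a + b + 1) => (kacPoly a b).coeff l := by
  ext ⟨k, hk⟩
  rw [Kmat_mulVec_apply _ (kacPoly_coeff_eq_zero (Nat.lt_succ_self _))]
  cases k with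
  | zero => simpa using kacPoly_coeff_one a b
  | succ m =>
    have h := kacPoly_coeff_add_two a b m
    simp only [Nat.add_eq_zero_iff, one_ne_zero, and_false, if_false, Nat.add_sub_cancel,
      Pi.smul_apply, smul_eq_mul]
    push_cast
    linear_combination h

/-- A square matrix with as many distinct eigenvalues as its size has no further eigenvalue. -/
lemma exists_eq_of_mulVec_eq_smul {K ι : Type*} [Field K] [Fintype ι] [DecidableEq ι]
    (A : Matrix ι ι K) (μ : ι → K) (hμ : Function.Injective μ) (v : ι → ι → K)
    (hv0 : ∀ j, v j ≠ 0) (hv : ∀ j, A.mulVec (v j) = μ j • v j)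
    {x : K} {u : ι → K} (hu0 : u ≠ 0) (hu : A.mulVec u = x • u) : ∃ j, x = μ j := by
  by_contra! hx
  have hinj : Function.Injective (fun o : Option ι => o.elim x μ) := by
    rintro (_ | i) (_ | j) h
    · rfl
    · exact absurd h (hx j)
    · exact absurd h.symm (hx i)
    · exact congrArg some (hμ h)
  have hli := Module.End.eigenvectors_linearIndependent' (Matrix.toLin' A)
    (fun o : Option ι => o.elim x μ) hinj (fun o => o.elim u v) (by
      rintro (_ | i)
      · exact ⟨Module.End.mem_eigenspace_iff.2 (by simpa using hu), hu0⟩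
      · exact ⟨Module.End.mem_eigenspace_iff.2 (by simpa using hv i), hv0 i⟩)
  have hcard := hli.fintype_card_le_finrank
  simp at hcard

theorem stmt_7 (N : ℕ) (hN : 1 ≤ N)
    (v : Fin (N+1) → Fin (N+1) → ℚ)
    (hv : ∀ j k, v j k = ∑ i ∈ Finset.range (min (k : ℕ) (j : ℕ) + 1),
        (-1 : ℚ) ^ ((k : ℕ) - i) * ((j : ℕ).choose i : ℚ) *
          ((N - (j : ℕ)).choose ((k : ℕ) - i) : ℚ)) :
    (∀ j, v j 0 = 1 ∧ v j ≠ 0 ∧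
        (Kmat N).mulVec (v j) = (2 * (j : ℕ) - (N : ℚ)) • v j) ∧
      (∀ x : ℚ, (∃ u : Fin (N+1) → ℚ, u ≠ 0 ∧ (Kmat N).mulVec u = x • u) ↔
        ∃ j : Fin (N+1), x = 2 * (j : ℕ) - (N : ℚ)) := by
  have heig : ∀ j, v j 0 = 1 ∧ v j ≠ 0 ∧
      (Kmat N).mulVec (v j) = (2 * (j : ℕ) - (N : ℚ)) • v j := by
    intro j
    have h0 : v j 0 = 1 := by simp [hv]
    refine ⟨h0, fun h => by simp [h] at h0, ?_⟩
    have hvj : v j = fun k : Fin (N + 1) => (kacPoly j (N - j)).coeff k := by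
      ext k
      rw [hv, kacPoly_coeff]
    obtain ⟨j, hj⟩ := j
    obtain ⟨b, rfl⟩ := Nat.exists_eq_add_of_le (Nat.lt_succ_iff.1 hj)
    simp only [Nat.add_sub_cancel_left] at hvj
    rw [hvj, Kmat_mulVec_kacPoly_coeff]
    congr 1
    push_cast
    ring
  refine ⟨heig, fun x => ⟨?_, ?_⟩⟩
  · rintro ⟨u, hu0, hu⟩
    refine exists_eq_of_mulVec_eq_smul (Kmat N) (fun j => 2 * (j : ℕ) - (N : ℚ)) ?_ v
      (fun j => (heig j).2.1) (fun j => (heig j).2.2) hu0 hu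
    intro i j h
    simpa [Fin.ext_iff] using h
  · rintro ⟨j, rfl⟩
    exact ⟨v j, (heig j).2⟩
end

section
/- For every N ≥ 1 and all a, c ∈ ℂ, the characteristic polynomial of the matrix B_N(a, −(a+c), c) factors as det(x·I_{N+1} − B_N(a, −(a+c), c)) = Π_{j=0}^{N} (x + j·a + (N−j)·c) as polynomials in x over ℂ. -/
open Matrix Polynomial

/-- The matrix `B_N(a,b,c)`. -/
noncomputable def Bmat (N : ℕ) (a b c : ℂ) : Matrix (Fin (N+1)) (Fin (N+1)) ℂ :=
  Matrix.of fun k l =>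
    if (l : ℕ) = (k : ℕ) + 1 then ((k : ℕ) + 1 : ℂ) * a
    else if (l : ℕ) = (k : ℕ) then ((k : ℕ) : ℂ) * b
    else if (l : ℕ) + 1 = (k : ℕ) then -((N - (k : ℕ) + 1 : ℕ) : ℂ) * c
    else 0

/-- Signed Pascal matrix: column `j` lists the coefficients of `(1 - t) ^ j`. -/
def signedPascal (N : ℕ) : Matrix (Fin (N + 1)) (Fin (N + 1)) ℂ :=
  Matrix.of fun k j => (-1) ^ (k : ℕ) * ((j : ℕ).choose k : ℂ)

/-- The matrix of `B_N(a, -(a + c), c)` in the basis `(1 - t) ^ j`; it is lower bidiagonal. -/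
noncomputable def lowerBidiagonal (N : ℕ) (a c : ℂ) : Matrix (Fin (N + 1)) (Fin (N + 1)) ℂ :=
  Matrix.of fun i j =>
    if (i : ℕ) = j then -((j : ℕ) * a + ((N : ℂ) - (j : ℕ)) * c)
    else if (i : ℕ) = (j : ℕ) + 1 then ((N : ℂ) - (j : ℕ)) * c
    else 0

lemma isUnit_signedPascal (N : ℕ) : IsUnit (signedPascal N) := by
  rw [Matrix.isUnit_iff_isUnit_det, Matrix.det_of_isUpperTriangular]
  · simp [signedPascal, Finset.prod_eq_zero_iff]
  · intro k j hkj
    have h : (j : ℕ) < k := hkj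
    simp [signedPascal, Nat.choose_eq_zero_of_lt h]

lemma sum_fin_ite_eq (n m : ℕ) (g : ℕ → ℂ) (hg : n ≤ m → g m = 0) :
    ∑ l : Fin n, (if (l : ℕ) = m then g l else 0) = g m := by
  rw [Fin.sum_univ_eq_sum_range (fun l => if l = m then g l else 0) n, Finset.sum_ite_eq']
  by_cases h : m < n
  · simp [h]
  · simp [h, hg (not_lt.mp h)]

lemma succ_mul_choose_succ (j k : ℕ) :
    ((k : ℂ) + 1) * (j.choose (k + 1) : ℂ) = ((j : ℂ) - k) * (j.choose k : ℂ) := by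
  rcases le_or_gt k j with h | h
  · have := Nat.choose_succ_right_eq j k
    rw [← Nat.cast_sub h]
    exact_mod_cast (by linarith : (k + 1) * j.choose (k + 1) = (j - k) * j.choose k)
  · simp [Nat.choose_eq_zero_of_lt h, Nat.choose_eq_zero_of_lt (Nat.lt_succ_of_lt h)]

lemma signedPascal_mul_lowerBidiagonal_apply (N : ℕ) (a c : ℂ) (k j : Fin (N + 1)) :
    (signedPascal N * lowerBidiagonal N a c) k j =
      (-1) ^ (k : ℕ) * (((j : ℕ).choose k : ℂ) * -((j : ℕ) * a + ((N : ℂ) - (j : ℕ)) * c) +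
        (((j : ℕ) + 1).choose k : ℂ) * (((N : ℂ) - (j : ℕ)) * c)) := by
  have h₀ := sum_fin_ite_eq (N + 1) j (fun i => (-1) ^ (k : ℕ) * (i.choose k : ℂ) *
    -((j : ℕ) * a + ((N : ℂ) - (j : ℕ)) * c)) (fun h => by omega)
  have h₁ := sum_fin_ite_eq (N + 1) (j + 1) (fun i => (-1) ^ (k : ℕ) * (i.choose k : ℂ) *
    (((N : ℂ) - (j : ℕ)) * c)) (fun h => by
      have : (j : ℕ) = N := by omega
      simp [this])
  rw [Matrix.mul_apply, mul_add, ← mul_assoc, ← mul_assoc, ← h₀, ← h₁, ← Finset.sum_add_distrib]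
  refine Finset.sum_congr rfl fun i _ => ?_
  simp only [signedPascal, lowerBidiagonal, Matrix.of_apply]
  split_ifs <;> first | contradiction | omega | simp

lemma Bmat_mul_signedPascal (N : ℕ) (a c : ℂ) :
    Bmat N a (-(a + c)) c * signedPascal N = signedPascal N * lowerBidiagonal N a c := by
  ext k j
  rw [signedPascal_mul_lowerBidiagonal_apply, Matrix.mul_apply]
  let v : ℕ → ℂ := fun l => (-1) ^ l * ((j : ℕ).choose l : ℂ)
  have h₁ := sum_fin_ite_eq (N + 1) (k + 1) (fun l => ((k : ℕ) + 1 : ℂ) * a * v l) (fun h => by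
    simp [v, Nat.choose_eq_zero_of_lt (show (j : ℕ) < k + 1 by omega)])
  have h₀ := sum_fin_ite_eq (N + 1) k (fun l => ((k : ℕ) : ℂ) * -(a + c) * v l)
    (fun h => by omega)
  obtain ⟨k, hk⟩ := k
  rcases k with _ | m
  · trans ((0 : ℕ) + 1 : ℂ) * a * v (0 + 1)
    · rw [← h₁]
      refine Finset.sum_congr rfl fun l _ => ?_
      simp only [signedPascal, Bmat, Matrix.of_apply, v]
      split_ifs <;> first | contradiction | omega | simp
    · simp [v]
      ring
  · have h₂ := sum_fin_ite_eq (N + 1) m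
      (fun l => -((N - (m + 1) + 1 : ℕ) : ℂ) * c * v l) (fun h => by omega)
    trans ((m + 1 : ℕ) + 1 : ℂ) * a * v (m + 1 + 1) + ((m + 1 : ℕ) : ℂ) * -(a + c) * v (m + 1) +
      -((N - (m + 1) + 1 : ℕ) : ℂ) * c * v m
    · rw [← h₁, ← h₀, ← h₂, ← Finset.sum_add_distrib, ← Finset.sum_add_distrib]
      refine Finset.sum_congr rfl fun l _ => ?_
      simp only [signedPascal, Bmat, Matrix.of_apply, v]
      split_ifs <;> first | contradiction | omega | simp
    · have hN : ((N - (m + 1) + 1 : ℕ) : ℂ) = N - m := by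
        rw [show N - (m + 1) + 1 = N - m by omega, Nat.cast_sub (by omega)]
      have e₁ := succ_mul_choose_succ j m
      have e₂ := succ_mul_choose_succ j (m + 1)
      simp only [hN, v, Nat.choose_succ_succ' (j : ℕ) m]
      push_cast at e₂ ⊢
      linear_combination (-1) ^ m * a * e₂ + (-1) ^ m * c * e₁

lemma charpoly_lowerBidiagonal (N : ℕ) (a c : ℂ) :
    (lowerBidiagonal N a c).charpoly =
      ∏ j : Fin (N + 1), (X + C ((j : ℕ) * a + ((N : ℂ) - (j : ℕ)) * c)) := by
  rw [← Matrix.charpoly_transpose, Matrix.charpoly_of_isUpperTriangular]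
  · refine Finset.prod_congr rfl fun j _ => ?_
    simp only [lowerBidiagonal, Matrix.transpose_apply, Matrix.of_apply, if_true, C_neg,
      sub_neg_eq_add]
  · intro j i hij
    have h : (i : ℕ) < j := hij
    simp only [lowerBidiagonal, Matrix.transpose_apply, Matrix.of_apply]
    rw [if_neg (by omega), if_neg (by omega)]

theorem stmt_8 (N : ℕ) (hN : 1 ≤ N) (a c : ℂ) :
    (Bmat N a (-(a + c)) c).charpoly =
      ∏ j : Fin (N+1),
        (X + C ((j : ℕ) * a + ((N : ℂ) - (j : ℕ)) * c)) := by
  obtain ⟨P, hP⟩ := isUnit_signedPascal N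
  have h := Bmat_mul_signedPascal N a c
  rw [← hP, ← Units.eq_mul_inv_iff_mul_eq] at h
  rw [h, Matrix.coe_units_inv, Matrix.charpoly_units_conj, charpoly_lowerBidiagonal]
end

section
/- Let N ≥ 1 and let α, β, γ, δ ∈ ℂ satisfy α·δ = β·γ, β ≠ 0 and δ ≠ 0. Then the characteristic polynomial of J_N is det(x·I_{N+1} − J_N) = (x − N·α·δ)^{N+1}, and the eigenspace of J_N for the eigenvalue N·α·δ, i.e. the kernel of J_N − N·α·δ·I_{N+1}, is one-dimensional. Thus J_N has a unique eigenvalue of algebraic multiplicity N+1 and geometric multiplicity 1. -/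
open Matrix Polynomial

/-- The action of `Jmat` on a vector given by a sequence vanishing at `N + 1`. -/
lemma Jmat_sum_mul (N : ℕ) (α β γ δ : ℂ) (f : ℕ → ℂ) (hf : f (N + 1) = 0) (k : Fin (N + 1)) :
    ∑ l : Fin (N + 1), Jmat N α β γ δ k l * f l =
      ((k : ℕ) + 1 : ℂ) * α * γ * f (k + 1) + ((k : ℕ) : ℂ) * (α * δ + β * γ) * f k
        - if (k : ℕ) = 0 then 0 else ((N : ℂ) - (k : ℕ) + 1) * β * δ * f (k - 1) := by
  obtain ⟨k, hk⟩ := k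
  have hkN : k ≤ N := Nat.lt_succ_iff.mp hk
  let F : ℕ → ℂ := fun l =>
    (if l = k + 1 then ((k : ℂ) + 1) * α * γ * f l else 0)
      + (if l = k then (k : ℂ) * (α * δ + β * γ) * f l else 0)
      - (if l = k - 1 then
          (if k = 0 then 0 else ((N : ℂ) - k + 1) * β * δ * f (k - 1)) else 0)
  have hsplit : ∀ l : Fin (N + 1), Jmat N α β γ δ ⟨k, hk⟩ l * f l = F l := by
    intro l
    simp only [Jmat, Matrix.of_apply, F]
    have hcast : ((N - k + 1 : ℕ) : ℂ) = (N : ℂ) - k + 1 := by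
      push_cast [Nat.cast_sub hkN]; ring
    rw [hcast]
    rcases Nat.eq_zero_or_pos k with rfl | hpos
    · split_ifs <;> first | omega | contradiction | simp
    · by_cases h : (l : ℕ) = k - 1
      · rw [← h]
        split_ifs <;> first | omega | ring
      · split_ifs <;> first | omega | ring
  rw [Finset.sum_congr rfl fun l _ => hsplit l, Fin.sum_univ_eq_sum_range F,
    Finset.sum_sub_distrib, Finset.sum_add_distrib, Finset.sum_ite_eq', Finset.sum_ite_eq',
    Finset.sum_ite_eq']
  have hmem : k - 1 ∈ Finset.range (N + 1) := Finset.mem_range.mpr (by omega)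
  rw [if_pos hmem, if_pos (Finset.mem_range.mpr hk)]
  congr 2
  split_ifs with h
  · rfl
  · obtain rfl : k = N := by rw [Finset.mem_range] at h; omega
    rw [hf, mul_zero]

/-- Coefficientwise form of `(X + a)² p' - N X p = N a p + (j - N) (X + a) ^ (j + 1)` for
`p = (X + a) ^ j`. -/
lemma coeff_X_add_C_pow_recurrence (N j k : ℕ) (a : ℂ) :
    ((k : ℂ) + 1) * a ^ 2 * ((X + C a) ^ j).coeff (k + 1)
        + 2 * (k : ℂ) * a * ((X + C a) ^ j).coeff k
        - (if k = 0 then 0 else ((N : ℂ) - k + 1) * ((X + C a) ^ j).coeff (k - 1)) =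
      N * a * ((X + C a) ^ j).coeff k + ((j : ℂ) - N) * ((X + C a) ^ (j + 1)).coeff k := by
  have hder : (X + C a) * derivative ((X + C a) ^ j) = C (j : ℂ) * (X + C a) ^ j := by
    cases j with
    | zero => simp
    | succ j => simp [derivative_pow]; ring
  have hX : ∀ (p : ℂ[X]) (m : ℕ), (X * derivative p).coeff m = m * p.coeff m := by
    intro p m
    cases m with
    | zero => simp
    | succ m => rw [coeff_X_mul, coeff_derivative]; push_cast; ring
  set p : ℂ[X] := (X + C a) ^ j with hp
  have hpoly : C (a ^ 2) * derivative p + C (2 * a) * (X * derivative p)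
      + X * (X * derivative p) - C (N : ℂ) * (X * p) =
      C (N * a) * p + C ((j : ℂ) - N) * (X + C a) ^ (j + 1) := by
    rw [pow_succ (X + C a) j, ← hp]
    simp only [C_mul, C_sub, C_pow]
    have h2 : (C 2 : ℂ[X]) = 2 := rfl
    rw [h2]
    linear_combination (X + C a) * hder
  have hk := congrArg (fun q => q.coeff k) hpoly
  simp only [coeff_add, coeff_sub, coeff_C_mul, hX, coeff_derivative] at hk
  rw [← hk]
  cases k with
  | zero => simp
  | succ k =>
    rw [coeff_X_mul, coeff_X_mul, hX]
    simp
    ring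

/-- The binomial vector `(X + α / β) ^ j` is mapped by `Jmat` to a combination of itself and of
the next one. -/
lemma Jmat_sum_mul_coeff (N : ℕ) (α β γ δ : ℂ) (hD : α * δ = β * γ) (hβ : β ≠ 0)
    (j : ℕ) (hj : j ≤ N) (k : Fin (N + 1)) :
    ∑ l : Fin (N + 1), Jmat N α β γ δ k l * ((X + C (α / β)) ^ j).coeff l =
      N * α * δ * ((X + C (α / β)) ^ j).coeff k
        + β * δ * ((j : ℂ) - N) * ((X + C (α / β)) ^ (j + 1)).coeff k := by
  have hdeg : ((X + C (α / β)) ^ j).coeff (N + 1) = 0 :=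
    coeff_eq_zero_of_natDegree_lt (by rw [natDegree_pow, natDegree_X_add_C]; omega)
  refine (Jmat_sum_mul N α β γ δ ((X + C (α / β)) ^ j : ℂ[X]).coeff hdeg k).trans ?_
  have h := coeff_X_add_C_pow_recurrence N j k (α / β)
  obtain ⟨a, rfl⟩ : ∃ a, α = a * β := ⟨α / β, by field_simp⟩
  obtain rfl : γ = a * δ := mul_left_cancel₀ hβ (by rw [← hD]; ring)
  rw [mul_div_cancel_right₀ a hβ] at h ⊢
  split_ifs at h ⊢ <;> linear_combination β * δ * h

lemma Jmat_charpoly (N : ℕ) (α β γ δ : ℂ) (hD : α * δ = β * γ) (hβ : β ≠ 0) :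
    (Jmat N α β γ δ).charpoly = (X - C ((N : ℂ) * α * δ)) ^ (N + 1) := by
  let P : Matrix (Fin (N + 1)) (Fin (N + 1)) ℂ :=
    Matrix.of fun i j => ((X + C (α / β)) ^ (j : ℕ)).coeff i
  let T : Matrix (Fin (N + 1)) (Fin (N + 1)) ℂ := Matrix.of fun i j =>
    if i = j then N * α * δ else if (i : ℕ) = j + 1 then β * δ * ((j : ℂ) - N) else 0
  have hPdet : P.det = 1 := by
    rw [Matrix.det_of_isUpperTriangular]
    · refine Finset.prod_eq_one fun i _ => ?_
      simp [P, coeff_X_add_C_pow]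
    · intro i j hij
      have : (j : ℕ) < i := hij
      simp [P, coeff_X_add_C_pow, Nat.choose_eq_zero_of_lt this]
  have hJP : Jmat N α β γ δ * P = P * T := by
    ext k j
    simp only [Matrix.mul_apply, P, Matrix.of_apply]
    rw [Jmat_sum_mul_coeff N α β γ δ hD hβ j (Nat.lt_succ_iff.mp j.2) k]
    let F : ℕ → ℂ := fun l =>
      (if l = j then N * α * δ * ((X + C (α / β)) ^ l).coeff k else 0)
        + (if l = j + 1 then β * δ * ((j : ℂ) - N) * ((X + C (α / β)) ^ l).coeff k else 0)
    have hT : ∀ l : Fin (N + 1), ((X + C (α / β)) ^ (l : ℕ)).coeff k * T l j = F l := by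
      intro l
      simp only [F, T, Matrix.of_apply, Fin.ext_iff]
      split_ifs <;> first | omega | ring
    rw [Finset.sum_congr rfl fun l _ => hT l, Fin.sum_univ_eq_sum_range F, Finset.sum_add_distrib,
      Finset.sum_ite_eq', Finset.sum_ite_eq', if_pos (Finset.mem_range.mpr j.2)]
    congr 1
    split_ifs with h
    · rfl
    · have : (j : ℕ) = N := by rw [Finset.mem_range] at h; omega
      rw [this]; ring
  have hunit : IsUnit P := (Matrix.isUnit_iff_isUnit_det P).mpr (by rw [hPdet]; exact isUnit_one)
  obtain ⟨U, hU⟩ := hunit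
  have hJ : Jmat N α β γ δ = U.val * T * U⁻¹.val := by
    rw [hU, ← hJP, ← hU, Units.mul_inv_cancel_right]
  rw [hJ, Matrix.coe_units_inv, Matrix.charpoly_units_conj, ← Matrix.charpoly_transpose,
    Matrix.charpoly_of_isUpperTriangular]
  · simp [T]
  · intro i j hij
    have : (j : ℕ) < i := hij
    simp only [T, Matrix.transpose_apply, Matrix.of_apply, Fin.ext_iff]
    split_ifs <;> first | omega | rfl

/-- An eigenvector of `Jmat` is determined by its last entry. -/
lemma Jmat_eigenvector_eq_zero (N : ℕ) (α β γ δ : ℂ) (hβ : β ≠ 0) (hδ : δ ≠ 0) (μ : ℂ)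
    (w : Fin (N + 1) → ℂ) (hw : Jmat N α β γ δ *ᵥ w = μ • w) (hlast : w (Fin.last N) = 0) :
    w = 0 := by
  let g : ℕ → ℂ := fun i => if h : i < N + 1 then w ⟨i, h⟩ else 0
  have hgw : ∀ l : Fin (N + 1), g l = w l := fun l => dif_pos l.2
  have hg : ∀ d k, N ≤ k + d → g k = 0 := by
    intro d
    induction d with
    | zero =>
      intro k hk
      rcases (show N ≤ k from hk).eq_or_lt with rfl | hlt
      · exact (hgw (Fin.last N)).trans hlast
      · exact dif_neg (by omega)
    | succ d ih =>
      intro k hk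
      by_cases hkN : N ≤ k
      · exact ih k (by omega)
      have hrow := congrFun hw ⟨k + 1, by omega⟩
      simp only [Matrix.mulVec, dotProduct, Pi.smul_apply, smul_eq_mul, ← hgw] at hrow
      rw [Jmat_sum_mul N α β γ δ g (dif_neg (by omega))] at hrow
      simp only [ih (k + 1) (by omega), ih (k + 1 + 1) (by omega), mul_zero,
        Nat.add_eq_zero_iff, one_ne_zero, and_false, if_false, Nat.add_sub_cancel] at hrow
      have hne : (N : ℂ) - k ≠ 0 := sub_ne_zero.mpr (by exact_mod_cast (by omega : N ≠ k))
      have hprod : ((N : ℂ) - k) * β * δ * g k = 0 := by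
        push_cast at hrow
        linear_combination -hrow
      simpa [hne, hβ, hδ] using hprod
  funext l
  rw [← hgw]
  exact hg N l (by omega)

theorem stmt_9 (N : ℕ) (hN : 1 ≤ N) (α β γ δ : ℂ)
    (hD : α * δ = β * γ) (hβ : β ≠ 0) (hδ : δ ≠ 0) :
    (Jmat N α β γ δ).charpoly = (X - C ((N : ℂ) * α * δ)) ^ (N + 1) ∧
      Module.finrank ℂ
        (LinearMap.ker (Jmat N α β γ δ - ((N : ℂ) * α * δ) • 1).mulVecLin) = 1 := by
  refine ⟨Jmat_charpoly N α β γ δ hD hβ, ?_⟩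
  have hker : ∀ w, w ∈ LinearMap.ker (Jmat N α β γ δ - ((N : ℂ) * α * δ) • 1).mulVecLin ↔
      Jmat N α β γ δ *ᵥ w = ((N : ℂ) * α * δ) • w := by
    intro w
    rw [LinearMap.mem_ker, Matrix.mulVecLin_apply, Matrix.sub_mulVec, Matrix.smul_mulVec,
      Matrix.one_mulVec, sub_eq_zero]
  let v : Fin (N + 1) → ℂ := fun l => ((X + C (α / β)) ^ N).coeff l
  have hv : Jmat N α β γ δ *ᵥ v = ((N : ℂ) * α * δ) • v := by
    funext k
    have h := Jmat_sum_mul_coeff N α β γ δ hD hβ N le_rfl k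
    rw [sub_self, mul_zero, zero_mul, add_zero] at h
    exact h
  have hvlast : v (Fin.last N) = 1 := by simp [v, coeff_X_add_C_pow]
  refine finrank_eq_one_iff'.mpr ⟨⟨v, (hker v).mpr hv⟩, ?_, ?_⟩
  · intro h
    have h0 : v = 0 := congrArg Subtype.val h
    rw [h0] at hvlast
    exact zero_ne_one hvlast
  · rintro ⟨w, hw⟩
    rw [hker] at hw
    refine ⟨w (Fin.last N), Subtype.ext ?_⟩
    refine sub_eq_zero.mp
      (Jmat_eigenvector_eq_zero N α β γ δ hβ hδ (N * α * δ) (w (Fin.last N) • v - w) ?_ ?_)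
    · rw [Matrix.mulVec_sub, Matrix.mulVec_smul, hv, hw, smul_sub, smul_comm]
    · simp [hvlast]
end

section
/- For every N ∈ ℕ, the characteristic polynomial of the matrix G_N factors as det(x·I_{N+1} − G_N) = Π_{j=0}^{N} (x − 2·(2j − N)) over ℚ (equivalently over ℂ); in particular, the eigenvalues of G_N are exactly the N+1 even integers 2(2j − N), j = 0, …, N. -/
open Matrix Polynomial

/-- The matrix `G_N` of da Fonseca–Kılıç, over `ℚ`. -/
def Gmat (N : ℕ) : Matrix (Fin (N+1)) (Fin (N+1)) ℚ :=
  Matrix.of fun k l =>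
    if (l : ℕ) = (k : ℕ) + 1 then ((k : ℕ) + 1 : ℚ)
    else if (l : ℕ) + 1 = (k : ℕ) then ((2 * N + 3 - (k : ℕ) : ℕ) : ℚ)
    else 0

/-- The generating polynomial of the eigenvector of `G_{j+m}` for the eigenvalue `2 (j - m)`. -/
noncomputable def eigenPoly (j m : ℕ) : ℚ[X] :=
  (1 + X) ^ (2 * j + 1) * (1 - X) ^ (2 * m + 1)

lemma Polynomial.reflect_pow_of_natDegree_le_one {R : Type*} [CommSemiring R] (p : R[X])
    (hp : p.natDegree ≤ 1) (n : ℕ) : reflect n (p ^ n) = reflect 1 p ^ n := by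
  induction n with
  | zero => simp
  | succ n ih =>
    have hn : (p ^ n).natDegree ≤ n := by
      simpa using natDegree_pow_le_of_le n hp
    rw [pow_succ, reflect_mul _ _ hn hp, ih, pow_succ]

lemma reflect_eigenPoly (j m : ℕ) :
    reflect (2 * j + 1 + (2 * m + 1)) (eigenPoly j m) = -eigenPoly j m := by
  have hadd : (1 + X : ℚ[X]).natDegree ≤ 1 := by compute_degree
  have hsub : (1 - X : ℚ[X]).natDegree ≤ 1 := by compute_degree
  have h1 : reflect 1 (1 : ℚ[X]) = X := by simp
  have hX : reflect 1 (X : ℚ[X]) = 1 := by simp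
  have hn (p : ℚ[X]) (hp : p.natDegree ≤ 1) (n : ℕ) : (p ^ n).natDegree ≤ n := by
    simpa using natDegree_pow_le_of_le n hp
  rw [eigenPoly, reflect_mul _ _ (hn _ hadd _) (hn _ hsub _),
    reflect_pow_of_natDegree_le_one _ hadd, reflect_pow_of_natDegree_le_one _ hsub,
    reflect_add, reflect_sub, h1, hX, ← neg_sub, Odd.neg_pow ⟨m, rfl⟩]
  ring

lemma coeff_eigenPoly_middle (j m : ℕ) : (eigenPoly j m).coeff (j + m + 1) = 0 := by
  have h := congrArg (coeff · (j + m + 1)) (reflect_eigenPoly j m)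
  simp only [coeff_reflect, coeff_neg] at h
  rw [revAt_le (by lia), show 2 * j + 1 + (2 * m + 1) - (j + m + 1) = j + m + 1 by lia] at h
  linarith

lemma coeff_eigenPoly_zero (j m : ℕ) : (eigenPoly j m).coeff 0 = 1 := by
  simp [eigenPoly, coeff_zero_eq_eval_zero]

lemma derivative_eigenPoly (j m : ℕ) :
    derivative (eigenPoly j m) + C (2 * (j + m + 1) : ℚ) * (eigenPoly j m * X)
      - derivative (eigenPoly j m) * X ^ 2 = C (2 * (j - m) : ℚ) * eigenPoly j m := by
  simp only [eigenPoly, derivative_mul, derivative_pow, derivative_one, derivative_X,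
    Nat.add_sub_cancel, map_mul, map_add, map_sub, map_natCast, map_one, map_ofNat]
  push_cast
  ring

lemma coeff_one_eigenPoly (j m : ℕ) :
    (eigenPoly j m).coeff 1 = 2 * (j - m : ℚ) * (eigenPoly j m).coeff 0 := by
  have h := congrArg (coeff · 0) (derivative_eigenPoly j m)
  simpa [coeff_derivative, coeff_X_pow, mul_coeff_zero] using h

lemma coeff_succ_succ_eigenPoly (j m k : ℕ) :
    (k + 2 : ℚ) * (eigenPoly j m).coeff (k + 2)
        + (2 * (j + m + 1) - k) * (eigenPoly j m).coeff k
      = 2 * (j - m) * (eigenPoly j m).coeff (k + 1) := by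
  have h := congrArg (coeff · (k + 1)) (derivative_eigenPoly j m)
  simp only [coeff_sub, coeff_add, coeff_C_mul, coeff_mul_X, coeff_derivative] at h
  cases k with
  | zero =>
    rw [coeff_mul_X_pow', if_neg (by lia)] at h
    push_cast at h ⊢
    linarith
  | succ k =>
    rw [show k + 1 + 1 = k + 2 by rfl, coeff_mul_X_pow, coeff_derivative] at h
    push_cast at h ⊢
    linarith

lemma Gmat_mulVec_apply (N : ℕ) (c : ℕ → ℚ) (hc : c (N + 1) = 0) (k : Fin (N + 1)) :
    (Gmat N).mulVec (fun l => c l) k = ((k : ℕ) + 1) * c (k + 1) +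
      if (k : ℕ) = 0 then 0 else (2 * N + 3 - (k : ℕ)) * c (k - 1) := by
  obtain ⟨k, hk⟩ := k
  have hsplit (l : ℕ) : (if l = k + 1 then (k + 1 : ℚ)
      else if l + 1 = k then ((2 * N + 3 - k : ℕ) : ℚ) else 0) * c l
      = (if l = k + 1 then (k + 1 : ℚ) * c l else 0)
        + if l + 1 = k then (2 * N + 3 - k : ℚ) * c l else 0 := by
    rw [Nat.cast_sub (by lia)]
    push_cast
    split_ifs <;> first | lia | ring
  simp only [mulVec, dotProduct, Gmat, of_apply]
  rw [Fin.sum_univ_eq_sum_range (fun l => (if l = k + 1 then (k + 1 : ℚ)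
      else if l + 1 = k then ((2 * N + 3 - k : ℕ) : ℚ) else 0) * c l) (N + 1)]
  simp only [hsplit, Finset.sum_add_distrib, Finset.sum_ite_eq', Finset.mem_range]
  congr 1
  · split_ifs with h
    · rfl
    · rw [show k + 1 = N + 1 by lia, hc, mul_zero]
  · cases k with
    | zero => simp
    | succ k =>
      simp only [Nat.add_right_cancel_iff, Finset.sum_ite_eq', Finset.mem_range]
      simp [show k < N + 1 by lia]

lemma Gmat_mulVec_eigenPoly (j m : ℕ) :
    (Gmat (j + m)).mulVec (fun l => (eigenPoly j m).coeff l)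
      = (2 * (j - m) : ℚ) • fun l : Fin (j + m + 1) => (eigenPoly j m).coeff l := by
  ext ⟨k, hk⟩
  rw [Gmat_mulVec_apply _ (eigenPoly j m).coeff (coeff_eigenPoly_middle j m)]
  cases k with
  | zero => simp [coeff_one_eigenPoly]
  | succ k =>
    simp only [Pi.smul_apply, smul_eq_mul, ← coeff_succ_succ_eigenPoly]
    simp
    ring

lemma exists_mulVec_eq_smul_iff_isRoot_charpoly {n K : Type*} [Fintype n] [DecidableEq n]
    [Field K] (A : Matrix n n K) (x : K) :
    (∃ u : n → K, u ≠ 0 ∧ A.mulVec u = x • u) ↔ A.charpoly.IsRoot x := by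
  rw [IsRoot.def, eval_charpoly, ← exists_mulVec_eq_zero_iff]
  refine exists_congr fun u => and_congr_right fun _ => ?_
  rw [sub_mulVec, sub_eq_zero, eq_comm]
  simp [scalar_apply, ← smul_one_eq_diagonal, smul_mulVec]

lemma Gmat_charpoly_isRoot (N : ℕ) (j : Fin (N + 1)) :
    (Gmat N).charpoly.IsRoot (2 * (2 * (j : ℕ) - (N : ℚ))) := by
  obtain ⟨j, hj⟩ := j
  obtain ⟨m, rfl⟩ := Nat.exists_eq_add_of_le (Nat.lt_succ_iff.mp hj)
  rw [← exists_mulVec_eq_smul_iff_isRoot_charpoly]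
  refine ⟨fun l => (eigenPoly j m).coeff l, fun h => ?_, ?_⟩
  · simpa [coeff_eigenPoly_zero] using congrFun h 0
  · rw [Gmat_mulVec_eigenPoly]
    congr 1
    push_cast
    ring

lemma Gmat_charpoly (N : ℕ) :
    (Gmat N).charpoly = ∏ j : Fin (N + 1), (X - C (2 * (2 * (j : ℕ) - (N : ℚ)))) := by
  have hinj : Function.Injective fun j : Fin (N + 1) => 2 * (2 * (j : ℕ) - (N : ℚ)) := by
    intro i j h
    have : ((i : ℕ) : ℚ) = (j : ℕ) := by simpa using h
    exact Fin.ext (by exact_mod_cast this)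
  refine eq_of_monic_of_dvd_of_natDegree_le (monic_prod_X_sub_C _ _) (charpoly_monic _)
    (Finset.prod_dvd_of_coprime ?_ fun j _ => dvd_iff_isRoot.mpr (Gmat_charpoly_isRoot N j)) ?_
  · exact fun i _ j _ hij => pairwise_coprime_X_sub_C hinj hij
  · rw [charpoly_natDegree_eq_dim, natDegree_finsetProd_X_sub_C_eq_card]
    simp

theorem stmt_11 (N : ℕ) :
    (Gmat N).charpoly =
      (∏ j : Fin (N+1), (X - C (2 * (2 * (j : ℕ) - (N : ℚ))))) ∧
      (∀ x : ℚ, (∃ u : Fin (N+1) → ℚ, u ≠ 0 ∧ (Gmat N).mulVec u = x • u) ↔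
        ∃ j : Fin (N+1), x = 2 * (2 * (j : ℕ) - (N : ℚ))) := by
  refine ⟨Gmat_charpoly N, fun x => ?_⟩
  rw [exists_mulVec_eq_smul_iff_isRoot_charpoly, Gmat_charpoly, IsRoot.def, eval_prod,
    Finset.prod_eq_zero_iff]
  simp [sub_eq_zero]
end

section
/- For every N ∈ ℕ, let M_{N+1} denote the (N+2)×(N+2) leading principal submatrix of the Sylvester–Kac matrix K_{2N+2}, i.e. the matrix indexed by k, l ∈ {0, …, N+1} with M_{N+1}[k, k+1] = k+1, M_{N+1}[k, k−1] = 2N+3−k, and 0 otherwise. Then det(x·I_{N+2} − S_{N+1}) = 2·det(x·I_{N+2} − M_{N+1}) − x·det(x·I_{N+1} − G_N) as polynomials in x. -/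
open Matrix Polynomial

/-- The matrix `S_N`, over `ℚ`. -/
def Smat (N : ℕ) : Matrix (Fin (N+1)) (Fin (N+1)) ℚ :=
  Matrix.of fun k l =>
    if (l : ℕ) = (k : ℕ) + 1 then
      (if (k : ℕ) = N - 1 then (2 * N : ℚ) else ((k : ℕ) + 1 : ℚ))
    else if (l : ℕ) + 1 = (k : ℕ) then ((2 * N + 1 - (k : ℕ) : ℕ) : ℚ)
    else 0

/-- The `(N+2)×(N+2)` leading principal submatrix `M_{N+1}` of `K_{2N+2}`, over `ℚ`. -/
def Mmat (N : ℕ) : Matrix (Fin (N+2)) (Fin (N+2)) ℚ :=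
  Matrix.of fun k l =>
    if (l : ℕ) = (k : ℕ) + 1 then ((k : ℕ) + 1 : ℚ)
    else if (l : ℕ) + 1 = (k : ℕ) then ((2 * N + 3 - (k : ℕ) : ℕ) : ℚ)
    else 0

/-- Replacing the last column by `e_last` turns the determinant into a leading principal minor. -/
theorem det_updateCol_last_single_one {R : Type*} [CommRing R] {n : ℕ}
    (A : Matrix (Fin (n + 1)) (Fin (n + 1)) R) :
    (A.updateCol (Fin.last n) (Pi.single (Fin.last n) 1)).det =
      (A.submatrix Fin.castSucc Fin.castSucc).det := by
  rw [← cramer_apply, cramer_eq_adjugate_mulVec, mulVec_single_one, col_apply,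
    adjugate_fin_succ_eq_det_submatrix, Fin.succAbove_last, Even.neg_one_pow ⟨_, rfl⟩, one_mul]

theorem Mmat_submatrix_castSucc (N : ℕ) :
    (Mmat N).submatrix Fin.castSucc Fin.castSucc = Gmat N := by
  ext i j
  simp [Mmat, Gmat]

theorem charmatrix_Mmat_submatrix_castSucc (N : ℕ) :
    (charmatrix (Mmat N)).submatrix Fin.castSucc Fin.castSucc = charmatrix (Gmat N) := by
  rw [← Mmat_submatrix_castSucc]
  ext1 i j
  simp [charmatrix_apply, diagonal_apply]

/-- `S_{N+1}` is `M_{N+1}` with its last column doubled. -/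
theorem Smat_apply (N : ℕ) (i j : Fin (N + 2)) :
    Smat (N + 1) i j = if j = Fin.last (N + 1) then 2 * Mmat N i j else Mmat N i j := by
  have hi := i.isLt
  have hj := j.isLt
  simp only [Smat, Mmat, of_apply, Fin.ext_iff, Fin.val_last, Nat.add_sub_cancel]
  by_cases h : (j : ℕ) = i + 1
  · by_cases hl : (i : ℕ) = N
    · simp [h, hl]
    · simp [h, hl]
  · by_cases h' : (j : ℕ) + 1 = i
    · have hne : (j : ℕ) ≠ N + 1 := by omega
      have hs : 2 * (N + 1) + 1 - (i : ℕ) = 2 * N + 3 - i := by omega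
      simp only [if_neg h, if_pos h', if_neg hne, hs]
    · simp [h, h']

theorem charmatrix_Smat (N : ℕ) :
    charmatrix (Smat (N + 1)) = (charmatrix (Mmat N)).updateCol (Fin.last (N + 1))
      ((2 : ℚ[X]) • (fun i => charmatrix (Mmat N) i (Fin.last (N + 1))) +
        (-X : ℚ[X]) • Pi.single (Fin.last (N + 1)) 1) := by
  have hC : (C 2 : ℚ[X]) = 2 := C_ofNat 2
  ext1 i j
  by_cases hj : j = Fin.last (N + 1)
  · subst hj
    by_cases hi : i = Fin.last (N + 1)
    · subst hi
      simp [Smat_apply, hC]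
      ring
    · simp [Smat_apply, hi, hC]
  · simp [charmatrix_apply, Smat_apply, hj]

theorem stmt_15 (N : ℕ) :
    (Smat (N + 1)).charpoly = 2 * (Mmat N).charpoly - X * (Gmat N).charpoly := by
  rw [charpoly, charmatrix_Smat, det_updateCol_add, det_updateCol_smul, det_updateCol_smul,
    det_updateCol_last_single_one, updateCol_eq_self,
    charmatrix_Mmat_submatrix_castSucc, charpoly, charpoly]
  ring
end

section
/- Let N ≥ 1, let H_N = (1/2)·S_N as a matrix over ℚ, and let E_N be the (N+1)×(N+1) reversal matrix with entries E_N[i, j] = 1 if j = N−i and 0 otherwise (so E_N² = I). Then H_N^T · E_N = E_N · (2·C_N(−1/2) − N·I_{N+1}); equivalently, H_N^T = E_N · (2·C_N(−1/2) − N·I_{N+1}) · E_N^{-1}. -/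
open Matrix

/-- The tridiagonal matrix `C_N(a)` of three-term recurrence coefficients of the Hahn
polynomials with equal parameters `α = β = a`, over `ℚ`. -/
def Cmat (N : ℕ) (a : ℚ) : Matrix (Fin (N+1)) (Fin (N+1)) ℚ :=
  Matrix.of fun i l =>
    if (l : ℕ) = (i : ℕ) then (N : ℚ) / 2
    else if (l : ℕ) = (i : ℕ) + 1 then
      (if (i : ℕ) = 0 then (N : ℚ) / 2
       else (((i : ℕ) : ℚ) + 2 * a + 1) * ((N : ℚ) - ((i : ℕ) : ℚ)) /
         (2 * (2 * ((i : ℕ) : ℚ) + 2 * a + 1)))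
    else if (l : ℕ) + 1 = (i : ℕ) then
      ((i : ℕ) : ℚ) * (((i : ℕ) : ℚ) + 2 * a + (N : ℚ) + 1) /
        (2 * (2 * ((i : ℕ) : ℚ) + 2 * a + 1))
    else 0

/-- The reversal (anti-identity) matrix `E_N`, over `ℚ`. -/
def Emat (N : ℕ) : Matrix (Fin (N+1)) (Fin (N+1)) ℚ :=
  Matrix.of fun i j => if (i : ℕ) + (j : ℕ) = N then 1 else 0

theorem Emat_apply (N : ℕ) (i j : Fin (N + 1)) : Emat N i j = if j = i.rev then 1 else 0 := by
  have h : (i : ℕ) + j = N ↔ j = i.rev := by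
    rw [Fin.ext_iff, Fin.val_rev]
    omega
  simp [Emat, h]

theorem Emat_mul_apply (N : ℕ) (M : Matrix (Fin (N + 1)) (Fin (N + 1)) ℚ) (i j : Fin (N + 1)) :
    (Emat N * M) i j = M i.rev j := by
  simp [Matrix.mul_apply, Emat_apply]

theorem mul_Emat_apply (N : ℕ) (M : Matrix (Fin (N + 1)) (Fin (N + 1)) ℚ) (i j : Fin (N + 1)) :
    (M * Emat N) i j = M i j.rev := by
  simp [Matrix.mul_apply, Emat_apply, eq_comm (a := j), Fin.rev_eq_iff]

theorem Emat_mul_Emat (N : ℕ) : Emat N * Emat N = 1 := by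
  ext i j
  simp [Emat_mul_apply, Emat_apply, Matrix.one_apply, eq_comm]

/-- Rotating `S_N / 2` by a half-turn of both indices and transposing gives
`2 C_N(-1/2) - N`. -/
theorem half_Smat_rev_apply (N : ℕ) (hN : 1 ≤ N) (i j : Fin (N + 1)) :
    (2⁻¹ : ℚ) * Smat N j.rev i.rev =
      2 * Cmat N (-1/2) i j - N * (1 : Matrix (Fin (N + 1)) (Fin (N + 1)) ℚ) i j := by
  obtain ⟨i, hi⟩ := i
  obtain ⟨j, hj⟩ := j
  simp only [Smat, Cmat, Matrix.of_apply, Matrix.one_apply, Fin.val_rev, Fin.mk.injEq]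
  rcases eq_or_ne j i with rfl | hij
  · rw [if_neg (by omega), if_neg (by omega), if_pos rfl, if_pos rfl]
    ring
  rw [if_neg hij, if_neg hij.symm]
  rcases eq_or_ne j (i + 1) with rfl | hsup
  · rw [if_pos (by omega), if_pos rfl]
    rcases eq_or_ne i 0 with rfl | h0
    · rw [if_pos (by omega), if_pos rfl]
      ring
    · rw [if_neg (by omega), if_neg h0, Nat.cast_sub (by omega)]
      have : (i : ℚ) ≠ 0 := by exact_mod_cast h0
      have h2 : 2 * (i : ℚ) + 2 * (-1 / 2) + 1 = 2 * i := by ring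
      rw [h2]
      push_cast
      field_simp
      ring
  rw [if_neg (by omega), if_neg hsup]
  rcases eq_or_ne (j + 1) i with rfl | hsub
  · rw [if_pos (by omega), if_pos rfl, show 2 * N + 1 - (N + 1 - (j + 1)) = N + 1 + j by omega]
    have : (j : ℚ) + 1 ≠ 0 := by positivity
    have h2 : 2 * ((j + 1 : ℕ) : ℚ) + 2 * (-1 / 2) + 1 = 2 * (j + 1) := by push_cast; ring
    rw [h2]
    push_cast
    field_simp
    ring
  · rw [if_neg (by omega), if_neg hsub]
    ring

theorem stmt_16 (N : ℕ) (hN : 1 ≤ N) :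
    ((2⁻¹ : ℚ) • Smat N)ᵀ * Emat N =
        Emat N * ((2 : ℚ) • Cmat N (-1/2) - (N : ℚ) • (1 : Matrix (Fin (N+1)) (Fin (N+1)) ℚ)) ∧
      ((2⁻¹ : ℚ) • Smat N)ᵀ =
        Emat N * ((2 : ℚ) • Cmat N (-1/2) - (N : ℚ) • (1 : Matrix (Fin (N+1)) (Fin (N+1)) ℚ)) *
          (Emat N)⁻¹ := by
  have h : ((2⁻¹ : ℚ) • Smat N)ᵀ * Emat N =
      Emat N * ((2 : ℚ) • Cmat N (-1/2) -
        (N : ℚ) • (1 : Matrix (Fin (N+1)) (Fin (N+1)) ℚ)) := by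
    ext i j
    rw [mul_Emat_apply, Emat_mul_apply]
    simpa using half_Smat_rev_apply N hN i.rev j
  refine ⟨h, ?_⟩
  rw [← h, Matrix.inv_eq_left_inv (Emat_mul_Emat N), Matrix.mul_assoc, Emat_mul_Emat,
    Matrix.mul_one]
end
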